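/- arXiv:2605.31465 — 4 statements merged into one kernel-verified Lean document; each statement's English description precedes it below -/
import Mathlib

section
/- For every z ≥ 0, every stopping policy ψ and every decision policy δ, one has α(ψ,δ) + z β(ψ,δ) ≥ ∑_{t=0}^∞ ∫_{X^t} min{1, z Λ_t(x)} φ_t(x) dP₀^{⊗t}(x) = J_z(ψ). -/
/-!
The inequality holds pointwise before integrating. After moving the Type II error to `P₀` by the
change of measure `dP₁^{⊗t} = Λ_t dP₀^{⊗t}` (`pi_withDensity_ofReal`), the `t`-th term of
`α + z β` is the `P₀^{⊗t}`-integral of `(δ_t + (1 - δ_t) z Λ_t) φ_t`, and the convex combination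
`δ_t · 1 + (1 - δ_t) · z Λ_t` is at least `min 1 (z Λ_t)`.

To sum these inequalities over `t`, the three series have to converge (the sums are real-valued).
Each is dominated by `∑ t, ∫ φ_t dP^{⊗t}` with `P = P₀` or `P = P₁`. Pulling all the integrals
back to the infinite product space, the partial sums of the latter are integrals of
`∑ t < N, φ_t = 1 - ∏ n < N, (1 - ψ_n) ≤ 1` (`sum_phi_eq`, `summable_integral_phiFin`).
-/

open MeasureTheory Filter
open scoped ENNReal

noncomputable section

/-- A stopping policy: a sequence of measurable stopping probabilities
`ψ_t : X^t → [0,1]`. -/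
structure StoppingPolicy (X : Type*) [MeasurableSpace X] where
  ψ : ∀ t : ℕ, (Fin t → X) → ℝ
  mem_Icc : ∀ t x, ψ t x ∈ Set.Icc (0 : ℝ) 1
  measurable' : ∀ t, Measurable (ψ t)

namespace StoppingPolicy

variable {X : Type*} [MeasurableSpace X]

/-- The stopping-time distribution `φ_t`, as a function of the first `t` observations. -/
def phiFin (p : StoppingPolicy X) (t : ℕ) (x : Fin t → X) : ℝ :=
  p.ψ t x * ∏ n : Fin t, (1 - p.ψ n.1 fun i => x ⟨i.1, lt_trans i.2 n.2⟩)

/-- The stopping-time distribution `φ_t`, as a function of the full observation sequence. -/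
def phi (p : StoppingPolicy X) (t : ℕ) (x : ℕ → X) : ℝ :=
  p.ψ t (fun i => x i.1) * ∏ n ∈ Finset.range t, (1 - p.ψ n fun i => x i.1)

/-- The conditional expected sample size `E_ψ[τ(x)] = ∑_t t φ_t(x)`,
as a `[0,∞]`-valued function of the observation sequence. -/
def esample (p : StoppingPolicy X) (x : ℕ → X) : ℝ≥0∞ :=
  ∑' t : ℕ, (t : ℝ≥0∞) * ENNReal.ofReal (p.phi t x)

end StoppingPolicy

/-- The feasible set `I_c^∞` of stopping policies whose conditional expected sample
size is at most `c` for every observation sequence. -/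
def feasible (X : Type*) [MeasurableSpace X] (c : ℝ) : Set (StoppingPolicy X) :=
  {p | ∀ x : ℕ → X, p.esample x ≤ ENNReal.ofReal c}

/-- The limited-randomness feasible set `I_{c,k}^∞`: members of `I_c^∞` such that along
every observation sequence, at every time reached with positive probability, at most `k`
of the stopping probabilities used so far lie in the open interval `(0,1)`. -/
def feasibleK (X : Type*) [MeasurableSpace X] (c : ℝ) (k : ℕ) : Set (StoppingPolicy X) :=
  {p | p ∈ feasible X c ∧ ∀ x : ℕ → X, ∀ t : ℕ,
    0 < ∏ n ∈ Finset.range t, (1 - p.ψ n fun i => x i.1) →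
    {n : ℕ | n ≤ t ∧ p.ψ n (fun i => x i.1) ∈ Set.Ioo (0 : ℝ) 1}.ncard ≤ k}

variable {X : Type*} [MeasurableSpace X]

/-- The likelihood ratio `Λ_t(x) = ∏_{n=1}^t L(x_n)`. -/
def lam (L : X → ℝ) (t : ℕ) (x : Fin t → X) : ℝ := ∏ i, L (x i)

/-- The cost `J_z(ψ) = ∑_t ∫ min{1, z Λ_t} φ_t dP₀^{⊗t}`. -/
def cost (P₀ : Measure X) (L : X → ℝ) (z : ℝ) (p : StoppingPolicy X) : ℝ :=
  ∑' t : ℕ, ∫ x : Fin t → X, min 1 (z * lam L t x) * p.phiFin t x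
    ∂(Measure.pi fun _ => P₀)

/-- The optimal cost `ρ(z, c) = inf_{ψ ∈ I_c^∞} J_z(ψ)`. -/
def rho (P₀ : Measure X) (L : X → ℝ) (z c : ℝ) : ℝ :=
  sInf (cost P₀ L z '' feasible X c)

/-- The optimal limited-randomness cost `ρ_k(z, c) = inf_{ψ ∈ I_{c,k}^∞} J_z(ψ)`. -/
def rhoK (P₀ : Measure X) (L : X → ℝ) (k : ℕ) (z c : ℝ) : ℝ :=
  sInf (cost P₀ L z '' feasibleK X c k)

/-- The function `r_k(z, b) = (1/b) (g(z) − ∫ ρ_k(z L(x), b − 1) dP₀(x))`. -/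
def rfun (P₀ : Measure X) (L : X → ℝ) (k : ℕ) (z b : ℝ) : ℝ :=
  (1 / b) * (min 1 z - ∫ x, rhoK P₀ L k (z * L x) (b - 1) ∂P₀)

end

/-- A decision policy: a sequence of measurable decision probabilities
`δ_t : X^t → [0,1]`. -/
structure DecisionPolicy (X : Type*) [MeasurableSpace X] where
  δ : ∀ t : ℕ, (Fin t → X) → ℝ
  mem_Icc : ∀ t x, δ t x ∈ Set.Icc (0 : ℝ) 1
  measurable' : ∀ t, Measurable (δ t)

/-- The Type I error probability `α(ψ, δ)`. -/
noncomputable def errAlpha {X : Type*} [MeasurableSpace X] (P₀ : Measure X)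
    (p : StoppingPolicy X) (d : DecisionPolicy X) : ℝ :=
  ∑' t : ℕ, ∫ x : Fin t → X, d.δ t x * p.phiFin t x ∂(Measure.pi fun _ => P₀)

/-- The Type II error probability `β(ψ, δ)`. -/
noncomputable def errBeta {X : Type*} [MeasurableSpace X] (P₁ : Measure X)
    (p : StoppingPolicy X) (d : DecisionPolicy X) : ℝ :=
  ∑' t : ℕ, ∫ x : Fin t → X, (1 - d.δ t x) * p.phiFin t x ∂(Measure.pi fun _ => P₁)

lemma lam_nonneg {X : Type*} {L : X → ℝ} (hL : ∀ x, 0 ≤ L x) (t : ℕ) (x : Fin t → X) :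
    0 ≤ lam L t x :=
  Finset.prod_nonneg fun i _ => hL (x i)

section Lemmas

variable {X : Type*} [MeasurableSpace X]

namespace StoppingPolicy

lemma phiFin_nonneg (p : StoppingPolicy X) (t : ℕ) (x : Fin t → X) : 0 ≤ p.phiFin t x :=
  mul_nonneg (p.mem_Icc t x).1
    (Finset.prod_nonneg fun n _ => sub_nonneg.2 (p.mem_Icc n.1 _).2)

lemma phiFin_le_one (p : StoppingPolicy X) (t : ℕ) (x : Fin t → X) : p.phiFin t x ≤ 1 :=
  mul_le_one₀ (p.mem_Icc t x).2
    (Finset.prod_nonneg fun n _ => sub_nonneg.2 (p.mem_Icc n.1 _).2)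
    (Finset.prod_le_one (fun n _ => sub_nonneg.2 (p.mem_Icc n.1 _).2)
      fun n _ => sub_le_self _ (p.mem_Icc n.1 _).1)

lemma measurable_phiFin (p : StoppingPolicy X) (t : ℕ) : Measurable (p.phiFin t) := by
  unfold phiFin
  refine (p.measurable' t).mul (Finset.measurable_prod _ fun n _ => ?_)
  exact measurable_const.sub ((p.measurable' n.1).comp (by fun_prop))

lemma phiFin_restrict (p : StoppingPolicy X) (t : ℕ) (x : ℕ → X) :
    p.phiFin t (fun i => x i) = p.phi t x := by
  unfold phiFin phi
  rw [Finset.prod_range]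

/-- The probability of stopping before time `N` along `x` is the complement of the probability
of still running; the sum telescopes. -/
lemma sum_phi_eq (p : StoppingPolicy X) (N : ℕ) (x : ℕ → X) :
    ∑ t ∈ Finset.range N, p.phi t x
      = 1 - ∏ n ∈ Finset.range N, (1 - p.ψ n fun i => x i.1) := by
  induction N with
  | zero => simp
  | succ N ih =>
    rw [Finset.sum_range_succ, Finset.prod_range_succ, ih, phi]
    ring

lemma sum_phi_le_one (p : StoppingPolicy X) (N : ℕ) (x : ℕ → X) :
    ∑ t ∈ Finset.range N, p.phi t x ≤ 1 := by
  rw [sum_phi_eq]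
  exact sub_le_self _ (Finset.prod_nonneg fun n _ => sub_nonneg.2 (p.mem_Icc n _).2)

lemma integrable_phiFin (p : StoppingPolicy X) (t : ℕ) (μ : Measure (Fin t → X))
    [IsFiniteMeasure μ] : Integrable (p.phiFin t) μ := by
  refine Integrable.of_bound (p.measurable_phiFin t).aestronglyMeasurable 1
    (ae_of_all _ fun x => ?_)
  rw [Real.norm_of_nonneg (p.phiFin_nonneg t x)]
  exact p.phiFin_le_one t x

/-- The events "stop at time `t`" are disjoint, so their probabilities are summable. They are
compared on the common space `X^ℕ` with its infinite product measure. -/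
lemma summable_integral_phiFin (P : Measure X) [IsProbabilityMeasure P] (p : StoppingPolicy X) :
    Summable fun t : ℕ => ∫ x, p.phiFin t x ∂(Measure.pi fun _ : Fin t => P) := by
  have hmp (t : ℕ) : MeasurePreserving (fun (x : ℕ → X) (i : Fin t) => x i)
      (Measure.infinitePi fun _ : ℕ => P) (Measure.pi fun _ : Fin t => P) := by
    refine ⟨by fun_prop, ?_⟩
    rw [Measure.map_infinitePi_infinitePi_of_inj Fin.val_injective, Measure.infinitePi_eq_pi]
  have hint (t : ℕ) : Integrable (p.phi t) (Measure.infinitePi fun _ : ℕ => P) := by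
    have := (hmp t).integrable_comp_of_integrable (p.integrable_phiFin t _)
    exact this.congr (ae_of_all _ fun x => p.phiFin_restrict t x)
  have heq (t : ℕ) : ∫ x, p.phiFin t x ∂(Measure.pi fun _ : Fin t => P)
      = ∫ x, p.phi t x ∂(Measure.infinitePi fun _ : ℕ => P) := by
    rw [← (hmp t).map_eq, integral_map (hmp t).measurable.aemeasurable
      (p.measurable_phiFin t).aestronglyMeasurable]
    simp only [phiFin_restrict]
  refine summable_of_sum_range_le (c := 1) (fun t => integral_nonneg (p.phiFin_nonneg t))
    fun N => ?_
  simp only [heq]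
  rw [← integral_finsetSum _ fun t _ => hint t]
  calc ∫ x, ∑ t ∈ Finset.range N, p.phi t x ∂(Measure.infinitePi fun _ : ℕ => P)
      ≤ ∫ _, (1 : ℝ) ∂(Measure.infinitePi fun _ : ℕ => P) :=
        integral_mono (integrable_finsetSum _ fun t _ => hint t) (integrable_const _)
          (p.sum_phi_le_one N)
    _ = 1 := by simp

/-- A `[0,1]`-valued weight on the stopping probabilities leaves each of them integrable. -/
lemma integrable_mul_phiFin (p : StoppingPolicy X) (t : ℕ) (μ : Measure (Fin t → X))
    [IsFiniteMeasure μ] {w : (Fin t → X) → ℝ} (hw : Measurable w)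
    (hw01 : ∀ x, w x ∈ Set.Icc (0 : ℝ) 1) : Integrable (fun x => w x * p.phiFin t x) μ := by
  refine (p.integrable_phiFin t μ).bdd_mul (c := 1) hw.aestronglyMeasurable
    (ae_of_all _ fun x => ?_)
  rw [Real.norm_of_nonneg (hw01 x).1]
  exact (hw01 x).2

lemma summable_integral_mul_phiFin (P : Measure X) [IsProbabilityMeasure P]
    (p : StoppingPolicy X) {w : ∀ t : ℕ, (Fin t → X) → ℝ} (hw : ∀ t, Measurable (w t))
    (hw01 : ∀ t x, w t x ∈ Set.Icc (0 : ℝ) 1) :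
    Summable fun t : ℕ => ∫ x, w t x * p.phiFin t x ∂(Measure.pi fun _ : Fin t => P) := by
  refine (p.summable_integral_phiFin P).of_nonneg_of_le
    (fun t => integral_nonneg fun x => mul_nonneg (hw01 t x).1 (p.phiFin_nonneg t x))
    fun t => ?_
  exact integral_mono (p.integrable_mul_phiFin t _ (hw t) (hw01 t)) (p.integrable_phiFin t _)
    fun x => mul_le_of_le_one_left (p.phiFin_nonneg t x) (hw01 t x).2

end StoppingPolicy

lemma measurable_lam {L : X → ℝ} (hL : Measurable L) (t : ℕ) : Measurable (lam L t) := by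
  unfold lam
  fun_prop

/-- The density of `P₁^{⊗t}` with respect to `P₀^{⊗t}` is the likelihood ratio `Λ_t`. -/
lemma pi_withDensity_ofReal (P₀ : Measure X) [IsProbabilityMeasure P₀] {L : X → ℝ}
    (hL : Measurable L) (hLnn : ∀ x, 0 ≤ L x)
    [IsProbabilityMeasure (P₀.withDensity fun x => ENNReal.ofReal (L x))] (t : ℕ) :
    (Measure.pi fun _ : Fin t => P₀.withDensity fun x => ENNReal.ofReal (L x))
      = (Measure.pi fun _ : Fin t => P₀).withDensity fun x => ENNReal.ofReal (lam L t x) := by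
  refine Measure.pi_eq fun s hs => ?_
  have hm (i : Fin t) : Measurable ((s i).indicator fun y => ENNReal.ofReal (L y)) :=
    hL.ennreal_ofReal.indicator (hs i)
  have hind : (Set.univ.pi s).indicator (fun x => ENNReal.ofReal (lam L t x))
      = fun x => ∏ i, (s i).indicator (fun y => ENNReal.ofReal (L y)) (x i) := by
    ext x
    by_cases hx : x ∈ Set.univ.pi s
    · rw [Set.indicator_of_mem hx, lam, ENNReal.ofReal_prod_of_nonneg fun i _ => hLnn (x i)]
      exact Finset.prod_congr rfl fun i _ => by
        rw [Set.indicator_of_mem (hx i trivial)]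
    · rw [Set.indicator_of_notMem hx]
      simp only [Set.mem_univ_pi, not_forall] at hx
      obtain ⟨i, hi⟩ := hx
      exact (Finset.prod_eq_zero (Finset.mem_univ i) (Set.indicator_of_notMem hi _)).symm
  have hpi : MeasurableSet (Set.univ.pi s) := MeasurableSet.univ_pi hs
  rw [withDensity_apply _ hpi, ← lintegral_indicator hpi, hind,
    ProbabilityTheory.lintegral_prod_eq_prod_lintegral_of_indepFun Finset.univ
      (fun i (x : Fin t → X) => (s i).indicator (fun y => ENNReal.ofReal (L y)) (x i))
      (ProbabilityTheory.iIndepFun_pi fun i => (hm i).aemeasurable)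
      fun i => (hm i).comp (measurable_pi_apply i)]
  refine Finset.prod_congr rfl fun i _ => ?_
  rw [withDensity_apply _ (hs i), ← lintegral_indicator (hs i)]
  exact ((measurePreserving_eval (fun _ : Fin t => P₀) i).lintegral_comp (hm i))

end Lemmas

/-- **lower bound in Theorem 2.** For every `z ≥ 0`, every stopping policy
`ψ` and every decision policy `δ`, one has `α(ψ,δ) + z β(ψ,δ) ≥ J_z(ψ)`. -/
theorem errSum_ge_cost
    {X : Type*} [MeasurableSpace X] (P₀ P₁ : Measure X)
    [IsProbabilityMeasure P₀] [IsProbabilityMeasure P₁]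
    (L : X → ℝ) (hLmeas : Measurable L) (hLnn : ∀ x, 0 ≤ L x)
    (hP₁ : P₁ = P₀.withDensity fun x => ENNReal.ofReal (L x))
    (z : ℝ) (hz : 0 ≤ z) (p : StoppingPolicy X) (d : DecisionPolicy X) :
    cost P₀ L z p ≤ errAlpha P₀ p d + z * errBeta P₁ p d := by
  subst hP₁
  have hd01 (t : ℕ) (x : Fin t → X) : 1 - d.δ t x ∈ Set.Icc (0 : ℝ) 1 :=
    ⟨sub_nonneg.2 (d.mem_Icc t x).2, sub_le_self _ (d.mem_Icc t x).1⟩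
  have hdm (t : ℕ) : Measurable fun x => 1 - d.δ t x := measurable_const.sub (d.measurable' t)
  have hgm (t : ℕ) : Measurable fun x : Fin t → X => min 1 (z * lam L t x) :=
    measurable_const.min (measurable_const.mul (measurable_lam hLmeas t))
  have hg01 (t : ℕ) (x : Fin t → X) : min 1 (z * lam L t x) ∈ Set.Icc (0 : ℝ) 1 :=
    ⟨le_min zero_le_one (mul_nonneg hz (lam_nonneg hLnn t x)), min_le_left _ _⟩
  have hα := p.summable_integral_mul_phiFin P₀ d.measurable' d.mem_Icc
  have hβ := (p.summable_integral_mul_phiFin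
    (P₀.withDensity fun x => ENNReal.ofReal (L x)) hdm hd01).mul_left z
  unfold cost errAlpha errBeta
  rw [← tsum_mul_left, ← hα.tsum_add hβ]
  refine (p.summable_integral_mul_phiFin P₀ hgm hg01).tsum_le_tsum (fun t => ?_) (hα.add hβ)
  have hlm : Measurable fun x : Fin t → X => ENNReal.ofReal (lam L t x) :=
    (measurable_lam hLmeas t).ennreal_ofReal
  have hfin : ∀ᵐ x ∂(Measure.pi fun _ : Fin t => P₀), ENNReal.ofReal (lam L t x) < ∞ :=
    ae_of_all _ fun _ => ENNReal.ofReal_lt_top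
  have hint := p.integrable_mul_phiFin t
    (Measure.pi fun _ : Fin t => P₀.withDensity fun x => ENNReal.ofReal (L x)) (hdm t) (hd01 t)
  rw [pi_withDensity_ofReal P₀ hLmeas hLnn] at hint ⊢
  rw [integrable_withDensity_iff_integrable_smul' hlm hfin] at hint
  rw [integral_withDensity_eq_integral_toReal_smul hlm hfin, ← integral_const_mul,
    ← integral_add (p.integrable_mul_phiFin t _ (d.measurable' t) (d.mem_Icc t))
      (hint.const_mul z)]
  refine integral_mono (p.integrable_mul_phiFin t _ (hgm t) (hg01 t))
    ((p.integrable_mul_phiFin t _ (d.measurable' t) (d.mem_Icc t)).add (hint.const_mul z))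
    fun x => ?_
  -- a minimum is at most any convex combination
  have hmin : min 1 (z * lam L t x) ≤ d.δ t x * 1 + (1 - d.δ t x) * (z * lam L t x) := by
    nlinarith [mul_le_mul_of_nonneg_left (min_le_left 1 (z * lam L t x)) (d.mem_Icc t x).1,
      mul_le_mul_of_nonneg_left (min_le_right 1 (z * lam L t x)) (hd01 t x).1]
  have := mul_le_mul_of_nonneg_right hmin (p.phiFin_nonneg t x)
  simp only [smul_eq_mul, ENNReal.toReal_ofReal (lam_nonneg hLnn t x)]
  linarith
end

section
/- For every z ≥ 0, the sequence n ↦ ∫_{X^n} min{1, z ∏_{i=1}^n L(x_i)} dP₀^{⊗n}(x) is nonincreasing in n ∈ ℕ (with the value at n = 0 equal to min{1, z}). -/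
/-!
The map `t ↦ min 1 t` is concave and `L` has `P₀`-mean one, so Jensen's inequality gives
`∫ min 1 (a * L x) dP₀ ≤ min 1 a` for every `a` (`integral_min_one_mul_le`).  Splitting one coordinate
off `X^(n+1)` by Fubini and applying this with `a = z * ∏ L (x i)`, the product over the
remaining `n` coordinates, shows that one more observation does not increase the integral.
Measurability and boundedness of the truncated likelihood ratio (`integrable_min_one_mul_prod`)
justify the interchange.
-/

open MeasureTheory Filter
open scoped ENNReal

/-- The total mass of `P₁` is the `P₀`-mean of its density; integrability is part of the
conclusion, so that the value is not that of a divergent integral. -/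
lemma integrable_density_and_integral_eq_one {X : Type*} [MeasurableSpace X] {P₀ P₁ : Measure X}
    [IsProbabilityMeasure P₁] {L : X → ℝ} (hLmeas : Measurable L) (hLnn : ∀ x, 0 ≤ L x)
    (hP₁ : P₁ = P₀.withDensity fun x => ENNReal.ofReal (L x)) :
    Integrable L P₀ ∧ ∫ x, L x ∂P₀ = 1 := by
  have hmass : ∫⁻ x, ENNReal.ofReal (L x) ∂P₀ = 1 := by
    have h := measure_univ (μ := P₁)
    rwa [hP₁, withDensity_apply _ MeasurableSet.univ, Measure.restrict_univ] at h
  have hnn : 0 ≤ᵐ[P₀] L := Eventually.of_forall hLnn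
  refine ⟨⟨hLmeas.aestronglyMeasurable, ?_⟩, ?_⟩
  · rw [hasFiniteIntegral_iff_ofReal hnn, hmass]
    exact ENNReal.one_lt_top
  · rw [integral_eq_lintegral_of_nonneg_ae hnn hLmeas.aestronglyMeasurable, hmass,
      ENNReal.toReal_one]

/-- Jensen's inequality for the concave function `t ↦ min 1 t` and a density of mean one. -/
lemma integral_min_one_mul_le {X : Type*} [MeasurableSpace X] {P₀ : Measure X}
    [IsProbabilityMeasure P₀] {L : X → ℝ} (hLint : Integrable L P₀)
    (hLone : ∫ x, L x ∂P₀ = 1) (a : ℝ) :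
    ∫ x, min 1 (a * L x) ∂P₀ ≤ min 1 a := by
  have ha : Integrable (fun x => a * L x) P₀ := hLint.const_mul a
  have h1 : Integrable (fun _ : X => (1 : ℝ)) P₀ := integrable_const 1
  have hmin : Integrable (fun x => min 1 (a * L x)) P₀ := h1.inf ha
  refine le_min ?_ ?_
  · calc ∫ x, min 1 (a * L x) ∂P₀ ≤ ∫ _, (1 : ℝ) ∂P₀ :=
          integral_mono hmin h1 fun x => min_le_left _ _
      _ = 1 := by simp
  · calc ∫ x, min 1 (a * L x) ∂P₀ ≤ ∫ x, a * L x ∂P₀ :=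
          integral_mono hmin ha fun x => min_le_right _ _
      _ = a := by rw [integral_const_mul, hLone, mul_one]

lemma integrable_min_one_mul_prod {X : Type*} [MeasurableSpace X] {P₀ : Measure X}
    [IsProbabilityMeasure P₀] {L : X → ℝ} (hLmeas : Measurable L) (hLnn : ∀ x, 0 ≤ L x)
    {z : ℝ} (hz : 0 ≤ z) (n : ℕ) :
    Integrable (fun x : Fin n → X => min 1 (z * ∏ i, L (x i))) (Measure.pi fun _ => P₀) := by
  have hmeas : Measurable fun x : Fin n → X => min 1 (z * ∏ i, L (x i)) := by fun_prop
  refine Integrable.of_bound hmeas.aestronglyMeasurable 1 (Eventually.of_forall fun x => ?_)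
  have hnn : 0 ≤ z * ∏ i, L (x i) := mul_nonneg hz (Finset.prod_nonneg fun i _ => hLnn _)
  rw [Real.norm_of_nonneg (le_min zero_le_one hnn)]
  exact min_le_left _ _

/-- For every `z ≥ 0`, the sequence
`n ↦ ∫_{X^n} min{1, z ∏_{i=1}^n L(x_i)} dP₀^{⊗n}(x)` is nonincreasing in `n`, with
value `min{1, z}` at `n = 0`. -/
theorem fixedSampleCost_antitone
    {X : Type*} [MeasurableSpace X] (P₀ P₁ : Measure X)
    [IsProbabilityMeasure P₀] [IsProbabilityMeasure P₁]
    (L : X → ℝ) (hLmeas : Measurable L) (hLnn : ∀ x, 0 ≤ L x)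
    (hP₁ : P₁ = P₀.withDensity fun x => ENNReal.ofReal (L x))
    (z : ℝ) (hz : 0 ≤ z) :
    Antitone (fun n : ℕ =>
      ∫ x : Fin n → X, min 1 (z * ∏ i, L (x i)) ∂(Measure.pi fun _ => P₀)) ∧
    (∫ x : Fin 0 → X, min 1 (z * ∏ i, L (x i)) ∂(Measure.pi fun _ => P₀)) =
      min 1 z := by
  obtain ⟨hLint, hLone⟩ := integrable_density_and_integral_eq_one hLmeas hLnn hP₁
  refine ⟨antitone_nat_of_succ_le fun n => ?_, by simp⟩
  have he := (measurePreserving_piFinSuccAbove (fun _ : Fin (n + 1) => P₀) 0).symm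
  have hsplit : ∀ p : X × (Fin n → X),
      min 1 (z * ∏ i, L ((MeasurableEquiv.piFinSuccAbove (fun _ => X) 0).symm p i)) =
        min 1 ((z * ∏ i, L (p.2 i)) * L p.1) := by
    intro p
    simp only [MeasurableEquiv.piFinSuccAbove_symm_apply, Fin.insertNthEquiv_apply,
      Fin.insertNth_zero', Fin.prod_univ_succ, Fin.cons_zero, Fin.cons_succ]
    ring_nf
  have hint : Integrable (fun p : X × (Fin n → X) => min 1 ((z * ∏ i, L (p.2 i)) * L p.1))
      (P₀.prod (Measure.pi fun _ => P₀)) := by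
    have h := he.integrable_comp_of_integrable
      (integrable_min_one_mul_prod (P₀ := P₀) hLmeas hLnn hz (n + 1))
    exact h.congr (Eventually.of_forall hsplit)
  calc ∫ x : Fin (n + 1) → X, min 1 (z * ∏ i, L (x i)) ∂(Measure.pi fun _ => P₀)
      = ∫ p : X × (Fin n → X), min 1 ((z * ∏ i, L (p.2 i)) * L p.1)
          ∂(P₀.prod (Measure.pi fun _ => P₀)) := by
        rw [← he.integral_comp']
        exact integral_congr_ae (Eventually.of_forall hsplit)
    _ = ∫ y : Fin n → X, ∫ t, min 1 ((z * ∏ i, L (y i)) * L t) ∂P₀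
          ∂(Measure.pi fun _ => P₀) := integral_prod_symm _ hint
    _ ≤ ∫ y : Fin n → X, min 1 (z * ∏ i, L (y i)) ∂(Measure.pi fun _ => P₀) :=
        integral_mono hint.integral_prod_right (integrable_min_one_mul_prod hLmeas hLnn hz n)
          fun y => integral_min_one_mul_le hLint hLone _
end

section
/- Let c₀ ≥ 0 and let (b_t)_{t≥0} be a sequence of reals with b_t ≥ max{1, c_t} for all t, where c_{t+1} := b_t − 1. Set ψ_t := 1 − c_t/b_t ∈ [0,1] and P_t := ∏_{n=0}^{t−1} (1 − ψ_n) = ∏_{n=0}^{t−1} (c_n/b_n). Then for every N ≥ 1, ∑_{t=1}^{N} P_t = c₀ − c_N P_N. Consequently, if c_N P_N → 0 as N → ∞, then ∑_{t=1}^{∞} P_t = c₀, i.e., the expected sample size of the randomized stopping rule (ψ_t) equals c₀. -/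
/-!
Write `P N = ∏ n < N, c n / b n`. Since `P (N + 1) = P N * (c N / b N)` and `c (N + 1) + 1 = b N`,
we have `P (N + 1) + c (N + 1) * P (N + 1) = b N * P (N + 1) = c N * P N`, so the partial sums of
`P` telescope (`sum_survival_eq`). The terms are nonnegative, so convergence of the partial sums
to `c₀` gives the value of the infinite sum.
-/

open Filter

theorem sum_survival_eq (b c : ℕ → ℝ) (hb : ∀ t, b t ≠ 0)
    (hcs : ∀ t, c (t + 1) = b t - 1) (N : ℕ) :
    ∑ t ∈ Finset.range N, ∏ n ∈ Finset.range (t + 1), (1 - (1 - c n / b n)) =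
      c 0 - c N * ∏ n ∈ Finset.range N, (1 - (1 - c n / b n)) := by
  induction N with
  | zero => simp
  | succ N ih =>
    rw [Finset.sum_range_succ, ih, Finset.prod_range_succ, hcs]
    have := hb N
    field_simp
    ring

/-- **equalization property of the randomized stopping rule.**
Let `c₀ ≥ 0` and let `(b_t)` satisfy `b_t ≥ max{1, c_t}` where `c_{t+1} = b_t − 1`.
With `ψ_t = 1 − c_t/b_t` and `P_t = ∏_{n<t} (1 − ψ_n) = ∏_{n<t} c_n/b_n`, one has
`∑_{t=1}^{N} P_t = c₀ − c_N P_N` for every `N ≥ 1`; consequently, if `c_N P_N → 0`,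
then `∑_{t=1}^{∞} P_t = c₀`, i.e. the expected sample size equals `c₀`. -/
theorem expected_sample_size_equalization
    (c₀ : ℝ) (hc₀ : 0 ≤ c₀) (b c : ℕ → ℝ)
    (hc0 : c 0 = c₀)
    (hb : ∀ t : ℕ, max 1 (c t) ≤ b t)
    (hcs : ∀ t : ℕ, c (t + 1) = b t - 1) :
    (∀ t : ℕ, (1 : ℝ) - c t / b t ∈ Set.Icc (0 : ℝ) 1) ∧
    (∀ N : ℕ, 1 ≤ N →
      ∑ t ∈ Finset.Icc 1 N, ∏ n ∈ Finset.range t, (1 - (1 - c n / b n)) =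
        c₀ - c N * ∏ n ∈ Finset.range N, (1 - (1 - c n / b n))) ∧
    (Tendsto (fun N : ℕ => c N * ∏ n ∈ Finset.range N, (1 - (1 - c n / b n)))
        atTop (nhds 0) →
      ∑' t : ℕ, ∏ n ∈ Finset.range (t + 1), (1 - (1 - c n / b n)) = c₀) := by
  have hbpos : ∀ t, 0 < b t := fun t =>
    lt_of_lt_of_le one_pos ((le_max_left _ _).trans (hb t))
  have hcb : ∀ t, c t ≤ b t := fun t => (le_max_right _ _).trans (hb t)
  have hc : ∀ t, 0 ≤ c t := by
    rintro (_ | t)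
    · rwa [hc0]
    · rw [hcs]
      linarith [(le_max_left _ _).trans (hb t)]
  have hsum := sum_survival_eq b c (fun t => (hbpos t).ne') hcs
  rw [hc0] at hsum
  refine ⟨fun t => ⟨?_, ?_⟩, fun N _ => ?_, fun h => ?_⟩
  · linarith [(div_le_one (hbpos t)).2 (hcb t)]
  · linarith [div_nonneg (hc t) (hbpos t).le]
  · rw [← hsum N, Finset.range_eq_Ico, Finset.sum_Ico_add'
      (fun t => ∏ n ∈ Finset.range t, (1 - (1 - c n / b n)))]
    rfl
  · refine HasSum.tsum_eq ((hasSum_iff_tendsto_nat_of_nonneg (fun t => ?_) _).2 ?_)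
    · refine Finset.prod_nonneg fun n _ => ?_
      linarith [div_nonneg (hc n) (hbpos n).le]
    · simp only [hsum]
      simpa using h.const_sub c₀
end

section
/- Let μ < 0 < σ and λ > 0, and let Φ denote the cumulative distribution function of the standard normal distribution. Define f(b) := (1/b) · Φ( −(λ + μ b)/(σ √b) ) for b > 0 and b'' := ( −σ² + √(σ⁴ + μ² λ²) ) / μ². Then f is strictly increasing on the interval (0, b''], and consequently every b* ≥ 1 satisfying f(b*) ≥ f(b) for all b ≥ 1 satisfies b* ≥ −λ/μ − σ²/μ². -/
/-!
Write `φ` for the standard normal density and `h b = -(lam + μ b)/(σ √b)`, so that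
`f b = Φ (h b) / b`. Then `f' b = (φ (h b) · b h' b - Φ (h b)) / b²` with
`b h' b = (lam - μ b)/(2 σ √b)`. As long as `h b < 0`, the Mills-ratio bound
`Φ u · (-u) ≤ φ u` (`stdNormalCDF_mul_neg_le`) shows that `f' b > 0` as soon as
`b h' b · (-h b) > 1`, that is `lam² - μ² b² > 2 σ² b`. The right endpoint `b''` is the positive
root of `μ² b² + 2 σ² b - lam² = 0`, so `f' > 0` on `(0, b'')`, and there also `lam + μ b > 0`.

For the maximizer, `√(σ⁴ + μ² lam²) > -μ lam` gives `b'' > -lam/μ - σ²/μ²`; a maximizer below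
this bound would lie in `[1, b'')`, where `f` is strictly smaller than at `b''`.
-/

open Real

/-- The cumulative distribution function of the standard normal distribution:
`Φ(u) = ∫_{−∞}^{u} (2π)^{−1/2} e^{−s²/2} ds`. -/
noncomputable def stdNormalCDF (u : ℝ) : ℝ :=
  ∫ s in Set.Iic u, (Real.sqrt (2 * Real.pi))⁻¹ * Real.exp (-(s ^ 2) / 2)

/-- The standard normal density, as it appears in the integrand of `stdNormalCDF`. -/
noncomputable def stdNormalDensity (s : ℝ) : ℝ :=
  (Real.sqrt (2 * Real.pi))⁻¹ * Real.exp (-(s ^ 2) / 2)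

lemma stdNormalDensity_pos (s : ℝ) : 0 < stdNormalDensity s := by
  unfold stdNormalDensity; positivity

lemma continuous_stdNormalDensity : Continuous stdNormalDensity := by
  unfold stdNormalDensity; fun_prop

lemma integrable_stdNormalDensity : MeasureTheory.Integrable stdNormalDensity := by
  have h := (integrable_exp_neg_mul_sq (b := 1 / 2) (by norm_num)).const_mul
    (Real.sqrt (2 * Real.pi))⁻¹
  refine h.congr (Filter.Eventually.of_forall fun s => ?_)
  simp only [stdNormalDensity]
  ring_nf

lemma integrable_neg_mul_stdNormalDensity :
    MeasureTheory.Integrable (fun s => -s * stdNormalDensity s) := by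
  have h := (integrable_mul_exp_neg_mul_sq (b := 1 / 2) (by norm_num)).const_mul
    (-(Real.sqrt (2 * Real.pi))⁻¹)
  refine h.congr (Filter.Eventually.of_forall fun s => ?_)
  simp only [stdNormalDensity]
  ring_nf

lemma hasDerivAt_stdNormalDensity (s : ℝ) :
    HasDerivAt stdNormalDensity (-s * stdNormalDensity s) s := by
  have h1 : HasDerivAt (fun s : ℝ => -(s ^ 2) / 2) (-s) s := by
    refine ((hasDerivAt_pow 2 s).neg.div_const 2).congr_deriv ?_
    norm_num
    ring
  refine (h1.exp.const_mul (Real.sqrt (2 * Real.pi))⁻¹).congr_deriv ?_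
  rw [stdNormalDensity]
  ring

lemma tendsto_stdNormalDensity_atBot :
    Filter.Tendsto stdNormalDensity Filter.atBot (nhds 0) := by
  have h1 : Filter.Tendsto (fun s : ℝ => -(s ^ 2) / 2) Filter.atBot Filter.atBot := by
    have h2 : Filter.Tendsto (fun s : ℝ => s ^ 2 / 2) Filter.atBot Filter.atTop :=
      Filter.Tendsto.atTop_div_const (by norm_num)
        ((Filter.tendsto_pow_atTop two_ne_zero).comp Filter.tendsto_neg_atBot_atTop |>.congr
          fun s => by simp)
    refine (Filter.tendsto_neg_atTop_atBot.comp h2).congr fun s => ?_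
    simp only [Function.comp]; ring
  have h3 := (Real.tendsto_exp_atBot.comp h1).const_mul (Real.sqrt (2 * Real.pi))⁻¹
  rw [mul_zero] at h3
  exact h3

lemma hasDerivAt_stdNormalCDF (u : ℝ) :
    HasDerivAt stdNormalCDF (stdNormalDensity u) u := by
  have h1 : ∀ v, stdNormalCDF v = stdNormalCDF 0 + ∫ s in (0 : ℝ)..v, stdNormalDensity s := by
    intro v
    have := intervalIntegral.integral_Iic_sub_Iic
      (integrable_stdNormalDensity.integrableOn (s := Set.Iic 0))
      (integrable_stdNormalDensity.integrableOn (s := Set.Iic v))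
    rw [← this]
    simp only [stdNormalCDF, stdNormalDensity]
    ring
  rw [funext h1]
  exact (intervalIntegral.integral_hasDerivAt_right
    (continuous_stdNormalDensity.intervalIntegrable _ _)
    continuous_stdNormalDensity.stronglyMeasurable.stronglyMeasurableAtFilter
    continuous_stdNormalDensity.continuousAt).const_add _

/-- Mills-ratio bound for the left tail: on `(-∞, u]` one has `-u ≤ -s`, and `-s φ(s)` is the
derivative of `φ`. It holds for every `u`, but has content only for `u < 0`. -/
lemma stdNormalCDF_mul_neg_le (u : ℝ) : stdNormalCDF u * -u ≤ stdNormalDensity u := by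
  have h1 : ∫ s in Set.Iic u, -s * stdNormalDensity s = stdNormalDensity u - 0 :=
    MeasureTheory.integral_Iic_of_hasDerivAt_of_tendsto'
      (fun s _ => hasDerivAt_stdNormalDensity s)
      integrable_neg_mul_stdNormalDensity.integrableOn tendsto_stdNormalDensity_atBot
  have h2 : stdNormalCDF u * -u = ∫ s in Set.Iic u, -u * stdNormalDensity s := by
    rw [MeasureTheory.integral_const_mul, mul_comm]; rfl
  rw [h2, ← sub_zero (stdNormalDensity u), ← h1]
  refine MeasureTheory.setIntegral_mono_on
    (integrable_stdNormalDensity.const_mul _).integrableOn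
    integrable_neg_mul_stdNormalDensity.integrableOn measurableSet_Iic fun s hs => ?_
  exact mul_le_mul_of_nonneg_right (neg_le_neg hs) (stdNormalDensity_pos s).le

/-- Derivative of the argument `h` of `Φ`, written as `(b h' b) / b`. -/
lemma hasDerivAt_arg (μ σ lam b : ℝ) (hσ : 0 < σ) (hb : 0 < b) :
    HasDerivAt (fun b : ℝ => -(lam + μ * b) / (σ * Real.sqrt b))
      ((lam - μ * b) / (2 * σ * Real.sqrt b) / b) b := by
  have hs : 0 < Real.sqrt b := Real.sqrt_pos.2 hb
  have h1 : HasDerivAt (fun b : ℝ => -(lam + μ * b)) (-μ) b := by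
    have h := (((hasDerivAt_id b).const_mul μ).const_add lam).neg
    rwa [mul_one] at h
  have h2 := (Real.hasDerivAt_sqrt hb.ne').const_mul σ
  refine (h1.div h2 (by positivity)).congr_deriv ?_
  have hq : Real.sqrt b ^ 2 = b := Real.sq_sqrt hb.le
  generalize Real.sqrt b = r at hs hq ⊢
  subst hq
  field_simp
  ring

/-- The derivative of the objective is positive wherever `b` lies strictly below the positive
root of `μ² b² + 2 σ² b - lam²`. -/
lemma exists_pos_hasDerivAt (μ σ lam b : ℝ) (hσ : 0 < σ) (hlam : 0 < lam)
    (hb : 0 < b) (hlt : μ ^ 2 * b ^ 2 + 2 * σ ^ 2 * b < lam ^ 2) :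
    ∃ d, 0 < d ∧ HasDerivAt
      (fun b : ℝ => (1 / b) * stdNormalCDF (-(lam + μ * b) / (σ * Real.sqrt b))) d b := by
  have hs : 0 < Real.sqrt b := Real.sqrt_pos.2 hb
  have hd := (hasDerivAt_stdNormalCDF _).comp b (hasDerivAt_arg μ σ lam b hσ hb)
  have hi : HasDerivAt (fun b : ℝ => 1 / b) (-(b ^ 2)⁻¹) b := by
    simpa only [one_div] using hasDerivAt_inv hb.ne'
  refine ⟨_, ?_, hi.mul hd⟩
  have hpos : 0 < lam + μ * b := by
    have h0 : 0 < 2 * σ ^ 2 * b := by positivity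
    have : (-(μ * b)) ^ 2 < lam ^ 2 := by nlinarith
    have := lt_of_pow_lt_pow_left₀ 2 hlam.le this
    linarith
  have hneg : 0 < -(-(lam + μ * b) / (σ * Real.sqrt b)) := by
    rw [neg_div, neg_neg]; positivity
  have hg : 1 < (lam - μ * b) / (2 * σ * Real.sqrt b) *
      -(-(lam + μ * b) / (σ * Real.sqrt b)) := by
    rw [neg_div, neg_neg, div_mul_div_comm, one_lt_div (by positivity)]
    have hq : Real.sqrt b ^ 2 = b := Real.sq_sqrt hb.le
    calc 2 * σ * Real.sqrt b * (σ * Real.sqrt b) = 2 * σ ^ 2 * Real.sqrt b ^ 2 := by ring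
      _ = 2 * σ ^ 2 * b := by rw [hq]
      _ < (lam - μ * b) * (lam + μ * b) := by linarith
  have hm := stdNormalCDF_mul_neg_le (-(lam + μ * b) / (σ * Real.sqrt b))
  have hp := stdNormalDensity_pos (-(lam + μ * b) / (σ * Real.sqrt b))
  generalize -(lam + μ * b) / (σ * Real.sqrt b) = u at *
  generalize (lam - μ * b) / (2 * σ * Real.sqrt b) = g at *
  -- The non-strict Mills bound suffices because `g * (-u) > 1` is strict.
  have hkey : stdNormalCDF u < stdNormalDensity u * g := by
    have h1 := mul_lt_mul_of_pos_left hg hp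
    refine lt_of_mul_lt_mul_right ?_ hneg.le
    linarith
  have : -(b ^ 2)⁻¹ * stdNormalCDF u + 1 / b * (stdNormalDensity u * (g / b)) =
      (stdNormalDensity u * g - stdNormalCDF u) / b ^ 2 := by
    field_simp
    ring
  rw [this]
  exact div_pos (sub_pos.2 hkey) (by positivity)

/-- **lower bound on the maximizer of the single-randomization
objective.** Let `μ < 0 < σ` and `λ > 0`, and define
`f(b) = (1/b) Φ(−(λ + μ b)/(σ √b))` and
`b'' = (−σ² + √(σ⁴ + μ² λ²))/μ²`. Then `f` is strictly increasing on `(0, b'']`, and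
consequently every `b* ≥ 1` maximizing `f` over `[1, ∞)` satisfies
`b* ≥ −λ/μ − σ²/μ²`. -/
theorem maximizer_lower_bound_single_randomization
    (μ σ lam : ℝ) (hμ : μ < 0) (hσ : 0 < σ) (hlam : 0 < lam) :
    StrictMonoOn
      (fun b : ℝ => (1 / b) * stdNormalCDF (-(lam + μ * b) / (σ * Real.sqrt b)))
      (Set.Ioc 0 ((-σ ^ 2 + Real.sqrt (σ ^ 4 + μ ^ 2 * lam ^ 2)) / μ ^ 2)) ∧
    ∀ bstar : ℝ, 1 ≤ bstar →
      (∀ b : ℝ, 1 ≤ b →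
        (1 / b) * stdNormalCDF (-(lam + μ * b) / (σ * Real.sqrt b)) ≤
        (1 / bstar) * stdNormalCDF (-(lam + μ * bstar) / (σ * Real.sqrt bstar))) →
      -lam / μ - σ ^ 2 / μ ^ 2 ≤ bstar := by
  have hμ2 : 0 < μ ^ 2 := by have := hμ.ne; positivity
  have hR : Real.sqrt (σ ^ 4 + μ ^ 2 * lam ^ 2) ^ 2 = σ ^ 4 + μ ^ 2 * lam ^ 2 :=
    Real.sq_sqrt (by positivity)
  have hRgt : -μ * lam < Real.sqrt (σ ^ 4 + μ ^ 2 * lam ^ 2) := by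
    apply Real.lt_sqrt_of_sq_lt
    have : 0 < σ ^ 4 := by positivity
    nlinarith
  set R := Real.sqrt (σ ^ 4 + μ ^ 2 * lam ^ 2) with hRdef
  have hmono : StrictMonoOn
      (fun b : ℝ => (1 / b) * stdNormalCDF (-(lam + μ * b) / (σ * Real.sqrt b)))
      (Set.Ioc 0 ((-σ ^ 2 + R) / μ ^ 2)) := by
    refine strictMonoOn_of_deriv_pos (convex_Ioc _ _) ?_ ?_
    · intro b hb
      have hd := (hasDerivAt_stdNormalCDF _).comp b (hasDerivAt_arg μ σ lam b hσ hb.1)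
      have hi : ContinuousAt (fun b : ℝ => 1 / b) b :=
        continuousAt_const.div continuousAt_id hb.1.ne'
      exact (hi.mul hd.continuousAt).continuousWithinAt
    · intro b hb
      rw [interior_Ioc] at hb
      obtain ⟨hb0, hb1⟩ := hb
      rw [lt_div_iff₀ hμ2] at hb1
      -- `b < b''` says `b μ² + σ² < R`; squaring gives the quadratic inequality for `b`.
      have h1 : (b * μ ^ 2 + σ ^ 2) ^ 2 < R ^ 2 :=
        pow_lt_pow_left₀ (by linarith) (by positivity) (by norm_num)
      have h2 : μ ^ 2 * b ^ 2 + 2 * σ ^ 2 * b < lam ^ 2 := by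
        refine lt_of_mul_lt_mul_left ?_ hμ2.le
        nlinarith
      obtain ⟨d, hdpos, hd⟩ := exists_pos_hasDerivAt μ σ lam b hσ hlam hb0 h2
      rw [hd.deriv]
      exact hdpos
  refine ⟨hmono, fun bstar hb1 hmax => ?_⟩
  by_contra! hlt
  have hbound : -lam / μ - σ ^ 2 / μ ^ 2 < (-σ ^ 2 + R) / μ ^ 2 := by
    have : -lam / μ - σ ^ 2 / μ ^ 2 = (-σ ^ 2 + -μ * lam) / μ ^ 2 := by
      field_simp
      ring
    rw [this]
    gcongr
  have hlt' := hlt.trans hbound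
  have h := hmono ⟨by linarith, hlt'.le⟩ ⟨by linarith, le_rfl⟩ hlt'
  exact absurd h (not_lt.2 (hmax _ (by linarith)))
end
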